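/- arXiv:1504.06681 — 2 statements merged into one kernel-verified Lean document; each statement's English description precedes it below -/
import Mathlib

section
/- If x* ∈ (ℝⁿ)^T minimizes x ↦ p(x; y), then for every t ∈ {1,…,T} there exists ξ_t ∈ ℝⁿ with ‖ξ_t‖_∞ ≤ 2β such that x*_t = (KᵀK)⁻¹(Kᵀ y_t + ξ_t). In other words, every coordinate of the dynamic offline optimum lies within a 2β-perturbation (in the above sense) of the unconstrained least-squares tracker (KᵀK)⁻¹Kᵀ y_t. -/
open Finset

noncomputable def norm2sq {m : ℕ} (v : Fin m → ℝ) : ℝ := ∑ i, (v i) ^ 2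
noncomputable def norm1 {n : ℕ} (v : Fin n → ℝ) : ℝ := ∑ i, |v i|

noncomputable def trackCost {m n : ℕ} (β : ℝ) (K : Matrix (Fin m) (Fin n) ℝ)
    (T : ℕ) (y : ℕ → Fin m → ℝ) (x : ℕ → Fin n → ℝ) : ℝ :=
  ∑ t ∈ Finset.Icc 1 T,
    ((1 / 2) * norm2sq (y t - K.mulVec (x t)) + β * norm1 (x t - x (t - 1)))

/-!
Moving the single action `x_t` changes only the tracking term at time `t` and the switching terms
into and out of `x_t`, and the latter are together `2β`-Lipschitz in `x_t` for the `ℓ¹`-norm. An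
optimal `x_t` thus minimizes a quadratic up to a `2β`-Lipschitz penalty, so by first-order
optimality the gradient `-Kᵀ(y_t - K x_t)` of the quadratic has dual norm, that is `ℓ^∞`-norm, at
most `2β`. This gradient is `ξ_t`.
-/

section

open scoped Matrix Topology

variable {m n : ℕ}

theorem norm1_add_le (a b : Fin n → ℝ) : norm1 (a + b) ≤ norm1 a + norm1 b := by
  simp only [norm1, ← sum_add_distrib]
  exact sum_le_sum fun i _ => abs_add_le (a i) (b i)

theorem norm1_sub_le (a b : Fin n → ℝ) : norm1 (a - b) ≤ norm1 a + norm1 b := by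
  simpa [norm1, sub_eq_add_neg] using norm1_add_le a (-b)

theorem norm1_nonneg (a : Fin n → ℝ) : 0 ≤ norm1 a :=
  sum_nonneg fun i _ => abs_nonneg (a i)

theorem norm1_smul (s : ℝ) (a : Fin n → ℝ) : norm1 (s • a) = |s| * norm1 a := by
  simp [norm1, abs_mul, mul_sum]

theorem norm1_single (i : Fin n) (s : ℝ) : norm1 (Pi.single i s) = |s| := by
  simp [norm1, Pi.single_apply, apply_ite abs]

theorem norm2sq_sub_smul (a b : Fin m → ℝ) (s : ℝ) :
    norm2sq (a - s • b) = norm2sq a - 2 * s * (a ⬝ᵥ b) + s ^ 2 * norm2sq b := by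
  simp only [norm2sq, dotProduct, mul_sum, ← sum_sub_distrib, ← sum_add_distrib]
  refine sum_congr rfl fun i _ => ?_
  simp only [Pi.sub_apply, Pi.smul_apply, smul_eq_mul]
  ring

theorem abs_le_of_forall_mul_le_abs_mul_add_sq_mul {g b c : ℝ}
    (h : ∀ s : ℝ, s * g ≤ |s| * b + s ^ 2 * c) : |g| ≤ b := by
  have abs_le_add (s : ℝ) (hs : 0 < s) : |g| ≤ b + s * c := by
    have hpos := h s
    have hneg := h (-s)
    rw [abs_of_pos hs] at hpos
    rw [abs_neg, abs_of_pos hs] at hneg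
    refine abs_le'.2 ⟨le_of_mul_le_mul_left ?_ hs, le_of_mul_le_mul_left ?_ hs⟩ <;> linarith
  have tendsto_b : Filter.Tendsto (fun s : ℝ => b + s * c) (𝓝[>] 0) (𝓝 b) := by
    have : Continuous fun s : ℝ => b + s * c := by fun_prop
    simpa using (this.tendsto 0).mono_left nhdsWithin_le_nhds
  exact ge_of_tendsto tendsto_b (eventually_mem_nhdsWithin.mono abs_le_add)

theorem abs_residual_dotProduct_mulVec_le {L : ℝ} {K : Matrix (Fin m) (Fin n) ℝ} {y : Fin m → ℝ}
    {u : Fin n → ℝ}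
    (hu : ∀ v, 1 / 2 * norm2sq (y - K *ᵥ u) ≤ 1 / 2 * norm2sq (y - K *ᵥ v) + L * norm1 (v - u))
    (w : Fin n → ℝ) : |(y - K *ᵥ u) ⬝ᵥ K *ᵥ w| ≤ L * norm1 w := by
  refine abs_le_of_forall_mul_le_abs_mul_add_sq_mul (c := 1 / 2 * norm2sq (K *ᵥ w)) fun s => ?_
  have hs := hu (u + s • w)
  rw [Matrix.mulVec_add, Matrix.mulVec_smul, ← sub_sub, norm2sq_sub_smul, add_sub_cancel_left,
    norm1_smul] at hs
  linarith

theorem abs_transpose_mulVec_residual_le {L : ℝ} {K : Matrix (Fin m) (Fin n) ℝ} {y : Fin m → ℝ}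
    {u : Fin n → ℝ}
    (hu : ∀ v, 1 / 2 * norm2sq (y - K *ᵥ u) ≤ 1 / 2 * norm2sq (y - K *ᵥ v) + L * norm1 (v - u))
    (i : Fin n) : |(Kᵀ *ᵥ (y - K *ᵥ u)) i| ≤ L := by
  have h := abs_residual_dotProduct_mulVec_le hu (Pi.single i 1)
  rwa [Matrix.dotProduct_mulVec, dotProduct_single_one, ← Matrix.mulVec_transpose, norm1_single,
    abs_one, mul_one] at h

/-- The total `ℓ¹`-movement `∑_{t=1}^T ‖x_t - x_{t-1}‖₁` of an action sequence, indexed from `0` to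
avoid the truncated subtraction `t - 1`. -/
noncomputable def switchingCost (T : ℕ) (x : ℕ → Fin n → ℝ) : ℝ :=
  ∑ t ∈ range T, norm1 (x (t + 1) - x t)

theorem trackCost_eq_add_switchingCost (β : ℝ) (K : Matrix (Fin m) (Fin n) ℝ) (T : ℕ)
    (y : ℕ → Fin m → ℝ) (x : ℕ → Fin n → ℝ) :
    trackCost β K T y x =
      ∑ t ∈ Icc 1 T, 1 / 2 * norm2sq (y t - K *ᵥ x t) + β * switchingCost T x := by
  have reindex : switchingCost T x = ∑ t ∈ Icc 1 T, norm1 (x t - x (t - 1)) := by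
    rw [switchingCost, range_eq_Ico, ← Ico_add_one_right_eq_Icc]
    exact sum_Ico_add' (fun t => norm1 (x t - x (t - 1))) 0 T 1
  rw [reindex, mul_sum, ← sum_add_distrib, trackCost]

theorem switchingCost_le_add (T : ℕ) (x z : ℕ → Fin n → ℝ) :
    switchingCost T z ≤ switchingCost T x + 2 * ∑ t ∈ range (T + 1), norm1 (z t - x t) := by
  have movement_le (t : ℕ) : norm1 (z (t + 1) - z t) ≤
      norm1 (x (t + 1) - x t) + norm1 (z (t + 1) - x (t + 1)) + norm1 (z t - x t) := by
    calc norm1 (z (t + 1) - z t)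
        = norm1 (x (t + 1) - x t + (z (t + 1) - x (t + 1)) - (z t - x t)) := by
          congr 1; abel
      _ ≤ norm1 (x (t + 1) - x t + (z (t + 1) - x (t + 1))) + norm1 (z t - x t) :=
          norm1_sub_le _ _
      _ ≤ norm1 (x (t + 1) - x t) + norm1 (z (t + 1) - x (t + 1)) + norm1 (z t - x t) := by
          gcongr
          exact norm1_add_le _ _
  have total := sum_le_sum fun t (_ : t ∈ range T) => movement_le t
  rw [sum_add_distrib, sum_add_distrib] at total
  have drop_first := sum_range_succ' (fun t => norm1 (z t - x t)) T
  have drop_last := sum_range_succ (fun t => norm1 (z t - x t)) T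
  rw [switchingCost, switchingCost]
  linarith [norm1_nonneg (z 0 - x 0), norm1_nonneg (z T - x T)]

theorem switchingCost_update_le {T t : ℕ} (ht : t ≤ T) (x : ℕ → Fin n → ℝ) (v : Fin n → ℝ) :
    switchingCost T (Function.update x t v) ≤ switchingCost T x + 2 * norm1 (v - x t) := by
  have deviation :
      ∑ s ∈ range (T + 1), norm1 (Function.update x t v s - x s) = norm1 (v - x t) := by
    rw [sum_eq_single_of_mem t (mem_range_succ_iff.2 ht), Function.update_self]
    intro s _ hst
    simp [hst, norm1]
  exact deviation ▸ switchingCost_le_add T x (Function.update x t v)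

theorem trackCost_update_le {β : ℝ} (hβ : 0 ≤ β) (K : Matrix (Fin m) (Fin n) ℝ) {T t : ℕ}
    (ht : t ∈ Icc 1 T) (y : ℕ → Fin m → ℝ) (x : ℕ → Fin n → ℝ) (v : Fin n → ℝ) :
    trackCost β K T y (Function.update x t v) + 1 / 2 * norm2sq (y t - K *ᵥ x t) ≤
      trackCost β K T y x + 1 / 2 * norm2sq (y t - K *ᵥ v) + 2 * β * norm1 (v - x t) := by
  have tracking_off_t : ∑ s ∈ (Icc 1 T).erase t,
        1 / 2 * norm2sq (y s - K *ᵥ Function.update x t v s) =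
      ∑ s ∈ (Icc 1 T).erase t, 1 / 2 * norm2sq (y s - K *ᵥ x s) :=
    sum_congr rfl fun s hs => by rw [Function.update_of_ne (ne_of_mem_erase hs)]
  have switching := mul_le_mul_of_nonneg_left (switchingCost_update_le (mem_Icc.1 ht).2 x v) hβ
  rw [trackCost_eq_add_switchingCost, trackCost_eq_add_switchingCost, ← add_sum_erase _ _ ht,
    ← add_sum_erase _ _ ht, tracking_off_t, Function.update_self]
  linarith

theorem dynamic_optimum_near_least_squares_general {β : ℝ} (hβ : 0 ≤ β)
    {K : Matrix (Fin m) (Fin n) ℝ} {T t : ℕ} (ht : t ∈ Icc 1 T) {y : ℕ → Fin m → ℝ}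
    {x : ℕ → Fin n → ℝ}
    (hx : ∀ v, trackCost β K T y x ≤ trackCost β K T y (Function.update x t v)) :
    ∃ ξ : Fin n → ℝ, (∀ i, |ξ i| ≤ 2 * β) ∧ (Kᵀ * K) *ᵥ x t = Kᵀ *ᵥ y t + ξ := by
  have penalized_min (v : Fin n → ℝ) : 1 / 2 * norm2sq (y t - K *ᵥ x t) ≤
      1 / 2 * norm2sq (y t - K *ᵥ v) + 2 * β * norm1 (v - x t) := by
    linarith [hx v, trackCost_update_le hβ K ht y x v]
  refine ⟨-(Kᵀ *ᵥ (y t - K *ᵥ x t)), fun i => ?_, ?_⟩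
  · rw [Pi.neg_apply, abs_neg]
    exact abs_transpose_mulVec_residual_le penalized_min i
  · rw [Matrix.mulVec_sub, neg_sub, add_sub_cancel, Matrix.mulVec_mulVec]

end

/-- Every coordinate of the dynamic offline optimum lies within a `2β`-perturbation of
the unconstrained least-squares tracker: `x*_t = (KᵀK)⁻¹(Kᵀ y_t + ξ_t)` with
`‖ξ_t‖_∞ ≤ 2β`. -/
theorem dynamic_optimum_near_least_squares
    (m n T : ℕ) (hm : 1 ≤ m) (hn : 1 ≤ n) (hT : 1 ≤ T)
    (K : Matrix (Fin m) (Fin n) ℝ) (hK : IsUnit (K.transpose * K).det)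
    (β : ℝ) (hβ : 0 < β)
    (y : ℕ → Fin m → ℝ)
    (xstar : ℕ → Fin n → ℝ) (hxstar0 : xstar 0 = 0)
    (hxstar : ∀ x : ℕ → Fin n → ℝ, x 0 = 0 →
      trackCost β K T y xstar ≤ trackCost β K T y x) :
    ∀ t ∈ Finset.Icc 1 T, ∃ ξ : Fin n → ℝ,
      (∀ i, |ξ i| ≤ 2 * β) ∧
      xstar t = (K.transpose * K)⁻¹.mulVec (K.transpose.mulVec (y t) + ξ) := by
  intro t ht
  have hupdate (v : Fin n → ℝ) : Function.update xstar t v 0 = 0 := by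
    rw [Function.update_of_ne (Nat.one_le_iff_ne_zero.1 (mem_Icc.1 ht).1).symm, hxstar0]
  obtain ⟨ξ, hξ, normal_eq⟩ :=
    dynamic_optimum_near_least_squares_general hβ.le ht fun v => hxstar _ (hupdate v)
  exact ⟨ξ, hξ, by rw [← normal_eq, Matrix.mulVec_mulVec, Matrix.nonsing_inv_mul _ hK,
    Matrix.one_mulVec]⟩
end

section
/- Let ȳ := (1/T) Σ_{t=1}^T y_t and x̄ := K†ȳ − (β/T)(KᵀK)⁻¹𝟙. If every component of x̄ is positive, then x̄ minimizes g(x) := Σ_{t=1}^T (1/2)‖y_t − Kx‖₂² + β‖x‖₁ over ℝⁿ, and the optimal static cost equals g(x̄) = (1/2) Σ_{t=1}^T ( ‖(I − P)y_t‖₂² + ‖P(y_t − ȳ)‖₂² ) − β²·𝟙ᵀ(KᵀK)⁻¹𝟙/(2T) + β·𝟙ᵀK†ȳ. -/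
open Finset Matrix

noncomputable def pinv {m n : ℕ} (K : Matrix (Fin m) (Fin n) ℝ) :
    Matrix (Fin n) (Fin m) ℝ := (K.transpose * K)⁻¹ * K.transpose

noncomputable def proj {m n : ℕ} (K : Matrix (Fin m) (Fin n) ℝ) :
    Matrix (Fin m) (Fin m) ℝ := K * pinv K

/-!
Penalizing by the linear term `β * (w ⬝ᵥ x)` instead of `β‖x‖₁` turns the static cost into a
quadratic. Pythagoras for `P`, the variance decomposition around `ȳ` and completing the square give
`½ ∑ t, ‖y t - K x‖² + β (w ⬝ᵥ x) = ½ ∑ t, (‖(I - P) y t‖² + ‖P (y t - ȳ)‖²)`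
`+ T/2 ‖K (x̄ - x)‖² + β (w ⬝ᵥ K†ȳ) - β² (w ⬝ᵥ (KᵀK)⁻¹ w) / (2T)`,
which is least at `x = x̄` and displays the least value. For `w = 𝟙` the linear term never exceeds
`β‖x‖₁`, with equality on the nonnegative orthant, so a nonnegative `x̄` also minimizes the
original cost.
-/

theorem norm2sq_eq_dotProduct {m : ℕ} (v : Fin m → ℝ) : norm2sq v = v ⬝ᵥ v := by
  simp only [norm2sq, dotProduct, sq]

theorem norm2sq_nonneg {m : ℕ} (v : Fin m → ℝ) : 0 ≤ norm2sq v :=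
  sum_nonneg fun i _ => sq_nonneg (v i)

@[simp]
theorem norm2sq_zero {m : ℕ} : norm2sq (0 : Fin m → ℝ) = 0 := by
  rw [norm2sq_eq_dotProduct, dotProduct_zero]

theorem norm2sq_add {m : ℕ} (v w : Fin m → ℝ) :
    norm2sq (v + w) = norm2sq v + 2 * (v ⬝ᵥ w) + norm2sq w := by
  simp only [norm2sq_eq_dotProduct, add_dotProduct, dotProduct_add, dotProduct_comm w v]
  ring

theorem one_dotProduct_le_norm1 {n : ℕ} (x : Fin n → ℝ) : 1 ⬝ᵥ x ≤ norm1 x := by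
  rw [one_dotProduct]
  exact sum_le_sum fun i _ => le_abs_self (x i)

theorem norm1_eq_one_dotProduct {n : ℕ} {x : Fin n → ℝ} (hx : ∀ i, 0 ≤ x i) :
    norm1 x = 1 ⬝ᵥ x := by
  rw [one_dotProduct]
  exact sum_congr rfl fun i _ => abs_of_nonneg (hx i)

theorem sum_sub_mean_eq_zero {ι k V : Type*} [DivisionRing k] [CharZero k] [AddCommGroup V]
    [Module k V] (s : Finset ι) (y : ι → V) :
    ∑ t ∈ s, (y t - (#s : k)⁻¹ • ∑ i ∈ s, y i) = 0 := by
  obtain rfl | hs := s.eq_empty_or_nonempty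
  · exact sum_empty
  have hcard : (#s : k) ≠ 0 := Nat.cast_ne_zero.mpr hs.card_ne_zero
  rw [sum_sub_distrib, sum_const, ← Nat.cast_smul_eq_nsmul k, smul_inv_smul₀ hcard, sub_self]

theorem sum_norm2sq_sub {ι : Type*} {m : ℕ} {s : Finset ι} {z : ι → Fin m → ℝ}
    {zbar : Fin m → ℝ} (hz : ∑ t ∈ s, (z t - zbar) = 0) (a : Fin m → ℝ) :
    ∑ t ∈ s, norm2sq (z t - a) = ∑ t ∈ s, norm2sq (z t - zbar) + #s * norm2sq (zbar - a) := by
  have hcross : ∑ t ∈ s, (z t - zbar) ⬝ᵥ (zbar - a) = 0 := by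
    rw [← sum_dotProduct, hz, zero_dotProduct]
  have hsplit (t : ι) : norm2sq (z t - a) =
      norm2sq (z t - zbar) + 2 * ((z t - zbar) ⬝ᵥ (zbar - a)) + norm2sq (zbar - a) := by
    rw [← norm2sq_add, sub_add_sub_cancel]
  simp only [hsplit, sum_add_distrib, ← mul_sum, hcross, sum_const, nsmul_eq_mul, mul_zero,
    add_zero]

section LeastSquares

variable {m n : ℕ} {K : Matrix (Fin m) (Fin n) ℝ}

theorem proj_mulVec_sub_mulVec (v : Fin m → ℝ) (x : Fin n → ℝ) :
    proj K *ᵥ v - K *ᵥ x = K *ᵥ (pinv K *ᵥ v - x) := by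
  rw [proj, ← mulVec_mulVec, ← mulVec_sub]

theorem transpose_mul_proj (hK : IsUnit (Kᵀ * K).det) : Kᵀ * proj K = Kᵀ := by
  rw [proj, pinv, ← Matrix.mul_assoc, mul_nonsing_inv_cancel_left _ _ hK]

theorem residual_dotProduct_mulVec (hK : IsUnit (Kᵀ * K).det) (v : Fin m → ℝ) (x : Fin n → ℝ) :
    ((1 - proj K) *ᵥ v) ⬝ᵥ (K *ᵥ x) = 0 := by
  rw [dotProduct_mulVec, ← mulVec_transpose, mulVec_mulVec, Matrix.mul_sub, Matrix.mul_one,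
    transpose_mul_proj hK, sub_self, zero_mulVec, zero_dotProduct]

theorem norm2sq_sub_mulVec (hK : IsUnit (Kᵀ * K).det) (v : Fin m → ℝ) (x : Fin n → ℝ) :
    norm2sq (v - K *ᵥ x) = norm2sq ((1 - proj K) *ᵥ v) + norm2sq (proj K *ᵥ v - K *ᵥ x) := by
  have hsplit : v - K *ᵥ x = (1 - proj K) *ᵥ v + (proj K *ᵥ v - K *ᵥ x) := by
    rw [sub_mulVec, one_mulVec, sub_add_sub_cancel]
  rw [hsplit, norm2sq_add, proj_mulVec_sub_mulVec, residual_dotProduct_mulVec hK, mul_zero,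
    add_zero]

theorem sum_norm2sq_sub_mulVec {ι : Type*} (hK : IsUnit (Kᵀ * K).det) {s : Finset ι}
    {y : ι → Fin m → ℝ} {ybar : Fin m → ℝ} (hy : ∑ t ∈ s, (y t - ybar) = 0) (x : Fin n → ℝ) :
    ∑ t ∈ s, norm2sq (y t - K *ᵥ x) =
      ∑ t ∈ s, (norm2sq ((1 - proj K) *ᵥ y t) + norm2sq (proj K *ᵥ (y t - ybar))) +
        #s * norm2sq (K *ᵥ (pinv K *ᵥ ybar - x)) := by
  have hPy : ∑ t ∈ s, (proj K *ᵥ y t - proj K *ᵥ ybar) = 0 := by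
    simp only [← mulVec_sub, ← mulVec_sum, hy, mulVec_zero]
  rw [sum_congr rfl fun t _ => norm2sq_sub_mulVec hK (y t) x, sum_add_distrib,
    sum_norm2sq_sub hPy, proj_mulVec_sub_mulVec, ← add_assoc, ← sum_add_distrib]
  simp only [mulVec_sub]

theorem mulVec_dotProduct_mulVec_gram_inv (hK : IsUnit (Kᵀ * K).det) (x w : Fin n → ℝ) :
    (K *ᵥ x) ⬝ᵥ (K *ᵥ ((Kᵀ * K)⁻¹ *ᵥ w)) = w ⬝ᵥ x := by
  rw [dotProduct_comm, dotProduct_mulVec, ← mulVec_transpose, mulVec_mulVec, mulVec_mulVec,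
    mul_nonsing_inv _ hK, one_mulVec]

theorem norm2sq_mulVec_sub_add_dotProduct (hK : IsUnit (Kᵀ * K).det) {r : ℝ} (hr : r ≠ 0) (β : ℝ)
    (w : Fin n → ℝ) {x₀ xbar : Fin n → ℝ} (hxbar : xbar = x₀ - (β / r) • (Kᵀ * K)⁻¹ *ᵥ w)
    (x : Fin n → ℝ) :
    r / 2 * norm2sq (K *ᵥ (x₀ - x)) + β * (w ⬝ᵥ x) =
      r / 2 * norm2sq (K *ᵥ (xbar - x)) + β * (w ⬝ᵥ x₀) -
        β ^ 2 * (w ⬝ᵥ (Kᵀ * K)⁻¹ *ᵥ w) / (2 * r) := by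
  set u := (Kᵀ * K)⁻¹ *ᵥ w
  have hshift : K *ᵥ (x₀ - x) = K *ᵥ (xbar - x) + (β / r) • K *ᵥ u := by
    have hsub : x₀ - x = (xbar - x) + (β / r) • u := by
      rw [hxbar]
      abel
    rw [hsub, mulVec_add, mulVec_smul]
  have hcross : (K *ᵥ (xbar - x)) ⬝ᵥ (K *ᵥ u) = w ⬝ᵥ x₀ - β / r * (w ⬝ᵥ u) - w ⬝ᵥ x := by
    rw [mulVec_dotProduct_mulVec_gram_inv hK, hxbar, dotProduct_sub, dotProduct_sub,
      dotProduct_smul, smul_eq_mul]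
  have hnorm : norm2sq ((β / r) • K *ᵥ u) = (β / r) ^ 2 * (w ⬝ᵥ u) := by
    rw [norm2sq_eq_dotProduct, smul_dotProduct, dotProduct_smul,
      mulVec_dotProduct_mulVec_gram_inv hK, smul_eq_mul, smul_eq_mul, sq, mul_assoc]
  rw [hshift, norm2sq_add, dotProduct_smul, hcross, hnorm, smul_eq_mul]
  field

theorem sum_norm2sq_sub_mulVec_add_dotProduct {ι : Type*} (hK : IsUnit (Kᵀ * K).det) {s : Finset ι}
    (hs : s.Nonempty) {y : ι → Fin m → ℝ} {ybar : Fin m → ℝ}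
    (hybar : ybar = (#s : ℝ)⁻¹ • ∑ t ∈ s, y t) (β : ℝ) (w : Fin n → ℝ) {xbar : Fin n → ℝ}
    (hxbar : xbar = pinv K *ᵥ ybar - (β / #s) • (Kᵀ * K)⁻¹ *ᵥ w) (x : Fin n → ℝ) :
    (∑ t ∈ s, 1 / 2 * norm2sq (y t - K *ᵥ x)) + β * (w ⬝ᵥ x) =
      1 / 2 * ∑ t ∈ s, (norm2sq ((1 - proj K) *ᵥ y t) + norm2sq (proj K *ᵥ (y t - ybar))) -
        β ^ 2 * (w ⬝ᵥ (Kᵀ * K)⁻¹ *ᵥ w) / (2 * #s) + β * (w ⬝ᵥ pinv K *ᵥ ybar) +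
        #s / 2 * norm2sq (K *ᵥ (xbar - x)) := by
  have hcard : (#s : ℝ) ≠ 0 := Nat.cast_ne_zero.mpr hs.card_ne_zero
  have hy : ∑ t ∈ s, (y t - ybar) = 0 := hybar ▸ sum_sub_mean_eq_zero s y
  rw [← mul_sum, sum_norm2sq_sub_mulVec hK hy]
  linear_combination norm2sq_mulVec_sub_add_dotProduct hK hcard β w hxbar x

end LeastSquares

theorem static_optimum_formula_general {ι : Type*} {m n : ℕ} {s : Finset ι} (hs : s.Nonempty)
    {K : Matrix (Fin m) (Fin n) ℝ} (hK : IsUnit (Kᵀ * K).det) {β : ℝ} (hβ : 0 ≤ β)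
    {y : ι → Fin m → ℝ} {ybar : Fin m → ℝ} (hybar : ybar = (#s : ℝ)⁻¹ • ∑ t ∈ s, y t)
    {xbar : Fin n → ℝ} (hxbar : xbar = pinv K *ᵥ ybar - (β / #s) • (Kᵀ * K)⁻¹ *ᵥ 1)
    (hnonneg : ∀ i, 0 ≤ xbar i) :
    (∀ x : Fin n → ℝ, (∑ t ∈ s, 1 / 2 * norm2sq (y t - K *ᵥ xbar)) + β * norm1 xbar ≤
      (∑ t ∈ s, 1 / 2 * norm2sq (y t - K *ᵥ x)) + β * norm1 x) ∧
    (∑ t ∈ s, 1 / 2 * norm2sq (y t - K *ᵥ xbar)) + β * norm1 xbar =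
      1 / 2 * ∑ t ∈ s, (norm2sq ((1 - proj K) *ᵥ y t) + norm2sq (proj K *ᵥ (y t - ybar))) -
        β ^ 2 * (1 ⬝ᵥ (Kᵀ * K)⁻¹ *ᵥ 1) / (2 * #s) + β * (1 ⬝ᵥ pinv K *ᵥ ybar) := by
  have hcost := sum_norm2sq_sub_mulVec_add_dotProduct hK hs hybar β 1 hxbar
  have hvalue := hcost xbar
  rw [sub_self, mulVec_zero, norm2sq_zero, mul_zero, add_zero] at hvalue
  rw [norm1_eq_one_dotProduct hnonneg]
  refine ⟨fun x => ?_, hvalue⟩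
  calc
    _ ≤ (∑ t ∈ s, 1 / 2 * norm2sq (y t - K *ᵥ x)) + β * (1 ⬝ᵥ x) := by
      rw [hvalue, hcost x]
      exact le_add_of_nonneg_right (mul_nonneg (by positivity) (norm2sq_nonneg _))
    _ ≤ (∑ t ∈ s, 1 / 2 * norm2sq (y t - K *ᵥ x)) + β * norm1 x := by
      gcongr
      exact one_dotProduct_le_norm1 x

/-- If the candidate static solution `x̄ = K†ȳ − (β/T)(KᵀK)⁻¹𝟙` has positive components,
then it minimizes the static cost `g`, and the optimal static cost has the stated
closed form. -/
theorem static_optimum_formula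
    (m n T : ℕ) (hm : 1 ≤ m) (hn : 1 ≤ n) (hT : 1 ≤ T)
    (K : Matrix (Fin m) (Fin n) ℝ) (hK : IsUnit (K.transpose * K).det)
    (β : ℝ) (hβ : 0 < β)
    (y : ℕ → Fin m → ℝ)
    (ybar : Fin m → ℝ) (hybar : ybar = ((T : ℝ))⁻¹ • ∑ t ∈ Finset.Icc 1 T, y t)
    (xbar : Fin n → ℝ)
    (hxbar : xbar = (pinv K).mulVec ybar - (β / (T : ℝ)) • (K.transpose * K)⁻¹.mulVec 1)
    (hpos : ∀ i, 0 < xbar i) :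
    (∀ x : Fin n → ℝ,
      (∑ t ∈ Finset.Icc 1 T, (1 / 2) * norm2sq (y t - K.mulVec xbar)) + β * norm1 xbar
        ≤ (∑ t ∈ Finset.Icc 1 T, (1 / 2) * norm2sq (y t - K.mulVec x)) + β * norm1 x) ∧
    (∑ t ∈ Finset.Icc 1 T, (1 / 2) * norm2sq (y t - K.mulVec xbar)) + β * norm1 xbar
      = (1 / 2) * (∑ t ∈ Finset.Icc 1 T,
            (norm2sq ((1 - proj K).mulVec (y t)) + norm2sq ((proj K).mulVec (y t - ybar))))
        - β ^ 2 * ((1 : Fin n → ℝ) ⬝ᵥ (K.transpose * K)⁻¹.mulVec 1) / (2 * (T : ℝ))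
        + β * ((1 : Fin n → ℝ) ⬝ᵥ (pinv K).mulVec ybar) := by
  have hcard : #(Icc 1 T) = T := Nat.card_Icc 1 T
  simpa only [hcard] using static_optimum_formula_general (nonempty_Icc.mpr hT) hK hβ.le
    (hcard.symm ▸ hybar) (hcard.symm ▸ hxbar) fun i => (hpos i).le
end
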